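/- Assume n ≥ 2 and let w ∈ W_n satisfy: (1) w s_i > w for every 1 ≤ i ≤ n−1; (2) s_i w > w for every 2 ≤ i ≤ n−1; (3) tw > w; (4) w does not lie in the parabolic subgroup W_{n−1} = ⟨t, s_1, …, s_{n−2}⟩. Then w = r_2 r_3 ⋯ r_n. -/

import Mathlib

open scoped Classical

noncomputable section

/-! ## The hyperoctahedral group `W_n` as signed permutations of `I_n ⊆ ℤ` -/

abbrev P := Equiv.Perm ℤ

/-- `W_n` : permutations of `I_n = {±1, …, ±n}` commuting with `i ↦ -i`,
realized as permutations of `ℤ` fixing everything outside `I_n`. -/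
def Wset (n : ℕ) : Set P :=
  {π | (∀ i : ℤ, π (-i) = - π i) ∧ ∀ i : ℤ, (n : ℤ) < |i| → π i = i}

/-- the generator `t = (1, -1)` -/
def tgen : P := Equiv.swap 1 (-1)

/-- the generator `s_i = (i, i+1)(-i, -(i+1))` -/
def sgen (i : ℕ) : P :=
  Equiv.swap (i : ℤ) ((i : ℤ) + 1) * Equiv.swap (-(i : ℤ)) (-((i : ℤ) + 1))

/-- the generating set `S_n = {t, s_1, …, s_{n-1}}` -/
def Sset (n : ℕ) : Set P := insert tgen (sgen '' Set.Icc 1 (n - 1))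

/-- the length function of `W_n` with respect to `S_n` -/
def len (n : ℕ) (w : P) : ℕ :=
  sInf {k | ∃ l : List P, (∀ g ∈ l, g ∈ Sset n) ∧ l.prod = w ∧ l.length = k}

/-- number of occurrences of `tgen` in a list -/
def tcount (l : List P) : ℕ := (l.map (fun g => if g = tgen then 1 else 0)).sum

/-- `ℓ_t(w)` : the number of occurrences of `t` in a (any) reduced expression of `w` -/
def tlen (n : ℕ) (w : P) : ℕ :=
  sInf {k | ∃ l : List P, (∀ g ∈ l, g ∈ Sset n) ∧ l.prod = w ∧
    l.length = len n w ∧ tcount l = k}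

/-- the Bruhat order on `W_n` : `x ≤ y` iff some reduced expression of `y`
has a subword whose product is `x`. -/
def bruhat (n : ℕ) (x y : P) : Prop :=
  ∃ l l' : List P, (∀ g ∈ l, g ∈ Sset n) ∧ l.prod = y ∧ l.length = len n y ∧
    List.Sublist l' l ∧ l'.prod = x

/-! ## Generalized Robinson–Schensted correspondence -/

abbrev Tab := List (List ℕ)

/-- row insertion of `x` into one row; returns the new row and the bumped entry (if any) -/
def insRow (x : ℕ) : List ℕ → List ℕ × Option ℕ
  | [] => ([x], none)
  | y :: ys =>
    if x < y then (x :: ys, some y)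
    else
      let p := insRow x ys
      (y :: p.1, p.2)

/-- Schensted insertion of `x` into a tableau; returns the new tableau
and the (row, column) coordinates of the newly created box. -/
def insTab (x : ℕ) : Tab → Tab × ℕ × ℕ
  | [] => ([[x]], 0, 0)
  | row :: rest =>
    let p := insRow x row
    match p.2 with
    | none => (p.1 :: rest, 0, row.length)
    | some b =>
      let q := insTab b rest
      (p.1 :: q.1, q.2.1 + 1, q.2.2)

/-- place the label `lbl` at the end of row `pos.1` of the recording tableau -/
def place (lbl : ℕ) (pos : ℕ × ℕ) (T : Tab) : Tab :=
  if pos.1 < T.length then T.set pos.1 ((T.getD pos.1 []) ++ [lbl]) else T ++ [[lbl]]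

/-- one step of the generalized RS algorithm: insert `|π(i)|` into `A⁺` or `A⁻`
according to the sign of `π(i)`, and record `i` in the corresponding `B`-tableau. -/
def RSstep (π : P) (st : (Tab × Tab) × (Tab × Tab)) (i : ℕ) : (Tab × Tab) × (Tab × Tab) :=
  let v := (π (i : ℤ)).natAbs
  if 0 < π (i : ℤ) then
    let p := insTab v st.1.1
    ((p.1, st.1.2), (place i p.2 st.2.1, st.2.2))
  else
    let p := insTab v st.1.2
    ((st.1.1, p.1), (st.2.1, place i p.2 st.2.2))

def RSfull (n : ℕ) (π : P) : (Tab × Tab) × (Tab × Tab) :=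
  (((List.range n).map (· + 1)).foldl (RSstep π)) ((([], []), ([], [])))

/-- the insertion bitableau `A_n(π) = (A⁺, A⁻)` -/
def Atab (n : ℕ) (π : P) : Tab × Tab := (RSfull n π).1

/-- the recording bitableau `B_n(π) = (B⁺, B⁻)` -/
def Btab (n : ℕ) (π : P) : Tab × Tab := (RSfull n π).2

/-- `T` is a standard Young tableau -/
def IsStdTab (T : Tab) : Prop :=
  (∀ row ∈ T, row ≠ [] ∧ row.Chain' (· < ·)) ∧
  T.Chain' (fun r1 r2 => r2.length ≤ r1.length) ∧
  ∀ i j : ℕ, i + 1 < T.length → j < (T.getD (i + 1) []).length →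
    (T.getD i []).getD j 0 < (T.getD (i + 1) []).getD j 0

/-- `(T₁, T₂)` is an `n`-standard bitableau: both standard, entry sets disjoint
with union `{1, …, n}` -/
def IsNStdBitab (n : ℕ) (p : Tab × Tab) : Prop :=
  IsStdTab p.1 ∧ IsStdTab p.2 ∧ (p.1.flatten ++ p.2.flatten).Perm (List.range' 1 n)

/-- the shape of a bitableau -/
def shape2 (p : Tab × Tab) : List ℕ × List ℕ := (p.1.map List.length, p.2.map List.length)

/-! ## Knuth relations -/

/-- `t_i = (i, -i)` -/
def ttgen (i : ℕ) : P := Equiv.swap (i : ℤ) (-(i : ℤ))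

/-- `S'_n = S_n ∪ {t_1, …, t_n}` -/
def Sprime (n : ℕ) : Set P := Sset n ∪ (ttgen '' Set.Icc 1 n)

/-- the extended left descent set `L'(w)` -/
def Ldesc (n : ℕ) (w : P) : Set P := {u ∈ Sprime n | len n (u * w) < len n w}

/-- the elementary relation `x —s→ y` -/
def knuthStep (n : ℕ) (x y : P) : Prop :=
  ∃ i ∈ Set.Icc 1 (n - 1), y = sgen i * x ∧ len n x < len n y ∧
    ¬ (Ldesc n x ⊆ Ldesc n y)

/-- the relation `x ↔_L y` -/
def knuthRel (n : ℕ) : P → P → Prop :=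
  Relation.ReflTransGen (fun a b => knuthStep n a b ∨ knuthStep n b a)

/-! ## Parabolic subgroups, coset representatives and the decomposition -/

/-- the parabolic subgroup `𝔖_n = ⟨s_1, …, s_{n-1}⟩` -/
def SymN (n : ℕ) : Subgroup P := Subgroup.closure (sgen '' Set.Icc 1 (n - 1))

/-- the parabolic subgroup `𝔖_{l, n-l} = ⟨{s_1, …, s_{n-1}} \ {s_l}⟩` -/
def SymLR (n l : ℕ) : Subgroup P :=
  Subgroup.closure (sgen '' {i | 1 ≤ i ∧ i ≤ n - 1 ∧ i ≠ l})

/-- `Y_{l, n-l}` : minimal length representatives of left cosets of `𝔖_{l,n-l}` in `𝔖_n` -/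
def Yset (n l : ℕ) : Set P :=
  {w | w ∈ SymN n ∧ ∀ u ∈ SymLR n l, len n w ≤ len n (w * u)}

/-- `X_n` : minimal length representatives of the left cosets `w 𝔖_n` in `W_n` -/
def Xset (n : ℕ) : Set P :=
  {w | w ∈ Wset n ∧ ∀ u ∈ SymN n, len n w ≤ len n (w * u)}

/-- `X_n^{(l)}` -/
def Xl (n l : ℕ) : Set P := {w ∈ Xset n | tlen n w = l}

/-- `r_1 = t`, `r_{i+1} = s_i r_i` -/
def rgen : ℕ → P
  | 0 => 1
  | 1 => tgen
  | (i + 2) => sgen (i + 1) * rgen (i + 1)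

/-- `a_l = r_1 r_2 ⋯ r_l` -/
def al (l : ℕ) : P := ((List.range l).map (fun k => rgen (k + 1))).prod

/-- the set `X_n^{(l)} ⬝ 𝔖_{l, n-l}` -/
def XSset (n l : ℕ) : Set P := Set.image2 (· * ·) (Xl n l) (SymLR n l : Set P)

/-- `w = a ⬝ a_l ⬝ σ ⬝ b⁻¹` is the canonical decomposition of `w`
(with `a, b ∈ Y_{l,n-l}`, `σ ∈ 𝔖_{l,n-l}` and additivity of lengths) -/
def IsDecomp (n l : ℕ) (w a σ b : P) : Prop :=
  a ∈ Yset n l ∧ b ∈ Yset n l ∧ σ ∈ SymLR n l ∧ w = a * al l * σ * b⁻¹ ∧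
    len n w = len n a + len n (al l) + len n σ + len n b

/-- the relation `w ⇝_L w'` -/
def squig (n : ℕ) (w w' : P) : Prop :=
  ∃ l a σ b a' σ', tlen n w = l ∧ tlen n w' = l ∧
    IsDecomp n l w a σ b ∧ IsDecomp n l w' a' σ' b ∧ knuthRel n σ σ'

/-! ## The two-parameter Iwahori–Hecke algebra and Kazhdan–Lusztig data -/

/-- the ring `A = ℤ[V^{±1}, v^{±1}]`, as the group algebra of `Γ = ℤ × ℤ`
(a monomial `V^i v^j` corresponds to `(i,j) ∈ ℤ × ℤ`). -/
abbrev RR := AddMonoidAlgebra ℤ (ℤ × ℤ)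

/-- the monomial with exponent `g` -/
def mono (g : ℤ × ℤ) : RR := AddMonoidAlgebra.single g 1

/-- `Γ₋` for the lexicographic order with `V ≫ v`: `V^i v^j < 1` -/
def Gneg (g : ℤ × ℤ) : Prop := g.1 < 0 ∨ (g.1 = 0 ∧ g.2 < 0)

/-- an element of `ℤ[Γ₋]` : all monomials lie in `Γ₋` -/
def inNeg (f : RR) : Prop := ∀ g ∈ f.coeff.support, Gneg g

/-- the bar involution of `A`, `V ↦ V⁻¹`, `v ↦ v⁻¹` -/
def barR : RR → RR := fun f => .ofCoeff (Finsupp.equivMapDomain (Equiv.neg (ℤ × ℤ)) f.coeff)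

/-- the parameter `v_s` of a generator (`v_t = V`, `v_{s_i} = v`) -/
def vgen (g : P) : RR := if g = tgen then mono (1, 0) else mono (0, 1)

/-- the inverse `v_s⁻¹` of the parameter of a generator -/
def vgenInv (g : P) : RR := if g = tgen then mono (-1, 0) else mono (0, -1)

/-- the free `A`-module with basis indexed by permutations; the Hecke algebra
`H_n` is carried by the elements supported on `W_n`. -/
abbrev HH := P →₀ RR

/-- the standard basis element `T_w` -/
def TT (w : P) : HH := Finsupp.single w 1

/-- All the data attached to the Iwahori–Hecke algebra `H_n` of `W_n` over
`A = ℤ[V^{±1}, v^{±1}]`: the multiplication, the bar involution, the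
Kazhdan–Lusztig basis `C_w = Σ_y P*_{y,w} T_y` (for the order on `Γ` given
by `Γ₊ = {V^i v^j : i > 0} ∪ {v^j : j > 0}`), and Lusztig's `M`-polynomials,
together with their defining properties. -/
structure KLData (n : ℕ) where
  mul : HH → HH → HH
  mul_add_left : ∀ a b c, mul (a + b) c = mul a c + mul b c
  mul_add_right : ∀ a b c, mul a (b + c) = mul a b + mul a c
  mul_smul_left : ∀ (r : RR) a b, mul (r • a) b = r • mul a b
  mul_smul_right : ∀ (r : RR) a b, mul a (r • b) = r • mul a b
  mul_assoc : ∀ a b c, mul (mul a b) c = mul a (mul b c)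
  one_mul : ∀ a, mul (TT 1) a = a
  mul_one : ∀ a, mul a (TT 1) = a
  /-- `T_w T_{w'} = T_{w w'}` when lengths add -/
  T_mul : ∀ w w', w ∈ Wset n → w' ∈ Wset n →
    len n (w * w') = len n w + len n w' → mul (TT w) (TT w') = TT (w * w')
  /-- the quadratic relations `T_s² = T_1 + (v_s - v_s⁻¹) T_s` -/
  T_sq : ∀ g ∈ Sset n, mul (TT g) (TT g) = TT 1 + (vgen g - vgenInv g) • TT g
  bar : HH → HH
  bar_add : ∀ a b, bar (a + b) = bar a + bar b
  bar_smul : ∀ (r : RR) a, bar (r • a) = barR r • bar a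
  bar_mul : ∀ a b, bar (mul a b) = mul (bar a) (bar b)
  /-- `bar T_s = T_s⁻¹ = T_s + (v_s⁻¹ - v_s) T_1` -/
  bar_gen : ∀ g ∈ Sset n, bar (TT g) = TT g + (vgenInv g - vgen g) • TT 1
  /-- the Kazhdan–Lusztig basis element `C_w`, whose coordinate at `T_y` is
  the polynomial `P*_{y,w}` -/
  C : P → HH
  /-- `P*_{w,w} = 1` -/
  C_self : ∀ w, C w w = 1
  /-- `P*_{y,w} = 0` unless `y ≤ w` -/
  C_supp : ∀ w y, C w y ≠ 0 → bruhat n y w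
  /-- `P*_{y,w} ∈ ℤ[Γ₋]` for `y < w` -/
  C_neg : ∀ w y, y ≠ w → inNeg (C w y)
  /-- `C_w` is bar-invariant -/
  C_bar : ∀ w, w ∈ Wset n → bar (C w) = C w
  /-- `M s w` is the finitely supported family `z ↦ M^s_{z,w}` -/
  M : P → P → (P →₀ RR)
  M_supp : ∀ s w z, (M s w) z ≠ 0 → bruhat n z w ∧ z ≠ w ∧ len n (s * z) < len n z
  /-- the symmetry condition `bar M^s_{y,w} = M^s_{y,w}` -/
  M_bar : ∀ s w z, barR ((M s w) z) = (M s w) z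
  /-- the condition `M^s_{y,w} + Σ_{y<z<w, sz<z} P*_{y,z} M^s_{z,w} - v_s P*_{y,w} ∈ ℤ[Γ₋]` -/
  M_cond : ∀ s ∈ Sset n, ∀ y w, len n (s * y) < len n y → len n w < len n (s * w) →
    bruhat n y w → y ≠ w →
    inNeg ((M s w) y + (M s w).sum (fun z m => if z = y then 0 else C z y * m)
      - vgen s * C w y)
  /-- `C_s C_w = C_{sw} + Σ_{z<w, sz<z} M^s_{z,w} C_z` when `sw > w` -/
  mulC_up : ∀ s ∈ Sset n, ∀ w ∈ Wset n, len n w < len n (s * w) →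
    mul (C s) (C w) = C (s * w) + (M s w).sum (fun z m => m • C z)
  /-- `C_s C_w = (v_s + v_s⁻¹) C_w` when `sw < w` -/
  mulC_down : ∀ s ∈ Sset n, ∀ w ∈ Wset n, len n (s * w) < len n w →
    mul (C s) (C w) = (vgen s + vgenInv s) • C w

/-- `P_{y,w} = v_y⁻¹ v_w P*_{y,w}` -/
def Ppoly (n : ℕ) (D : KLData n) (y w : P) : RR :=
  mono ((tlen n w : ℤ) - (tlen n y : ℤ),
        ((len n w : ℤ) - (tlen n w : ℤ)) - ((len n y : ℤ) - (tlen n y : ℤ))) * D.C w y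

/-- the `R`-polynomials : `bar T_w = Σ_y R_{y,w} T_y` -/
def Rpoly {n : ℕ} (D : KLData n) (y w : P) : RR := (D.bar (TT w)) y

/-- `y ≤_{L,s} w` : `C_y` occurs with non-zero coefficient in `C_s C_w`
(expressed in the `C`-basis), for some `s ∈ S_n`, `y ≠ w` -/
def leLelem {n : ℕ} (D : KLData n) (y w : P) : Prop :=
  ∃ s ∈ Sset n, len n w < len n (s * w) ∧ (y = s * w ∨ (D.M s w) y ≠ 0)

/-- the preorder `≤_L` -/
def leL {n : ℕ} (D : KLData n) : P → P → Prop := Relation.ReflTransGen (leLelem D)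

/-- the equivalence `∼_L`; its classes are the left cells -/
def simL {n : ℕ} (D : KLData n) (y w : P) : Prop := leL D y w ∧ leL D w y

/-- `f` is a polynomial in `q = v²` -/
def isPolyInQ (f : RR) : Prop := ∀ g ∈ f.coeff.support, g.1 = 0 ∧ 0 ≤ g.2 ∧ 2 ∣ g.2

end

/-!
Call a pair `a < b` of non-zero integers an inversion of `w` if `w b < w a`.  A generator has, up to
replacing `(a, b)` by `(-b, -a)`, exactly one inversion: the pair it exchanges.  Following a pair
through a word therefore gives the strong exchange condition: if `(a, b)` is an inversion of `w`,
then multiplying `w` on the right by the reflection exchanging `a` and `b` removes a letter from any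
word for `w`.  So ascents of the length are ascents of values: the hypotheses say that `w` increases
on `[1, n]`, that `w⁻¹` increases on `[2, n]`, and that `w⁻¹ 1 > 0`.

Let `w m = 1` with `m ≥ 1`.  For `m < x ≤ n`, monotonicity of `w` and the bound `w n ≤ n` give
`w x ≤ x`, and the same argument for `w⁻¹` at `w x ≥ 2` gives `x ≤ w x`.  For `1 ≤ x < m` the values
`w x` increase within `[-m, -2]`, which has only `m - 1` elements.  Hence `w` is determined by `m`
and equals `r_2 ⋯ r_m`, which lies in `W_{n-1}` unless `m = n`.
-/

section OddPermutations

/-- The group of permutations `w` of `ℤ` satisfying `w (-x) = -w x`, encoded as the centralizer of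
negation. It contains the generators of `W_n` for every `n`. -/
def oddPerm : Subgroup P := Subgroup.centralizer {Equiv.neg ℤ}

variable {u w : P}

theorem mem_oddPerm_iff : w ∈ oddPerm ↔ Function.Odd w := by
  simp only [oddPerm, Subgroup.mem_centralizer_singleton_iff, Equiv.ext_iff,
    Equiv.Perm.mul_apply, Equiv.neg_apply, Function.Odd]

theorem oddPerm_ext (hu : u ∈ oddPerm) (hw : w ∈ oddPerm) (h : ∀ x, 0 < x → u x = w x) :
    u = w := by
  rw [mem_oddPerm_iff] at hu hw
  ext x
  rcases lt_trichotomy x 0 with hx | rfl | hx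
  · rw [← neg_neg x, hu, hw, h (-x) (by omega)]
  · rw [hu.map_zero, hw.map_zero]
  · exact h x hx

theorem apply_ne_zero_of_mem_oddPerm (hw : w ∈ oddPerm) {x : ℤ} (hx : x ≠ 0) : w x ≠ 0 := by
  rw [← (mem_oddPerm_iff.mp hw).map_zero]
  exact w.injective.ne hx

end OddPermutations

section Reflections

/-- The reflection of the hyperoctahedral group that exchanges `a` and `b`, and hence also `-a` and
`-b`. For `b = -a` these are the same exchange, so it must not be performed twice. -/
def signedSwap (a b : ℤ) : P :=
  if b = -a then Equiv.swap a b else Equiv.swap a b * Equiv.swap (-a) (-b)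

variable {n i : ℕ} {g : P} {a b : ℤ}

theorem tgen_eq_signedSwap : tgen = signedSwap (-1) 1 := by
  rw [signedSwap, if_pos (by norm_num), Equiv.swap_comm, tgen]

theorem sgen_eq_signedSwap (i : ℕ) : sgen i = signedSwap i (i + 1) := by
  rw [signedSwap, if_neg (by omega), sgen]

theorem mul_signedSwap {u : P} (hu : u ∈ oddPerm) (a b : ℤ) :
    u * signedSwap a b = signedSwap (u a) (u b) * u := by
  rw [mem_oddPerm_iff] at hu
  simp only [signedSwap, ← hu a, u.injective.eq_iff]
  split_ifs
  · rw [Equiv.mul_swap_eq_swap_mul]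
  · rw [← mul_assoc, Equiv.mul_swap_eq_swap_mul u, mul_assoc, Equiv.mul_swap_eq_swap_mul u, hu a,
      hu b, mul_assoc]

theorem tgen_apply (x : ℤ) : tgen x = if x = 1 then -1 else if x = -1 then 1 else x := by
  simp only [tgen, Equiv.swap_apply_def]

theorem sgen_apply (hi : 1 ≤ i) (x : ℤ) :
    sgen i x = if x = i then (i : ℤ) + 1 else if x = i + 1 then (i : ℤ)
      else if x = -i then -((i : ℤ) + 1) else if x = -((i : ℤ) + 1) then -(i : ℤ) else x := by
  simp only [sgen, Equiv.Perm.mul_apply, Equiv.swap_apply_def]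
  split_ifs <;> omega

theorem tgen_mem_Sset (n : ℕ) : tgen ∈ Sset n := Set.mem_insert _ _

theorem sgen_mem_Sset (hi : i ∈ Set.Icc 1 (n - 1)) : sgen i ∈ Sset n :=
  Set.mem_insert_of_mem _ (Set.mem_image_of_mem _ hi)

theorem inv_eq_self_of_mem_Sset (hg : g ∈ Sset n) : g⁻¹ = g := by
  refine inv_eq_of_mul_eq_one_left (Equiv.ext fun x ↦ ?_)
  rcases hg with rfl | ⟨i, hi, rfl⟩
  · simp [tgen]
  · have hi : 1 ≤ i := hi.1
    simp only [Equiv.Perm.mul_apply, sgen_apply hi, Equiv.Perm.one_apply]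
    split_ifs <;> omega

theorem mem_oddPerm_of_mem_Sset (hg : g ∈ Sset n) : g ∈ oddPerm := by
  rw [mem_oddPerm_iff]
  intro x
  rcases hg with rfl | ⟨i, hi, rfl⟩
  · simp only [tgen_apply]
    split_ifs <;> omega
  · have hi : 1 ≤ i := hi.1
    simp only [sgen_apply hi]
    split_ifs <;> omega

theorem closure_Sset_le_oddPerm (n : ℕ) : Subgroup.closure (Sset n) ≤ oddPerm :=
  (Subgroup.closure_le _).mpr fun _ ↦ mem_oddPerm_of_mem_Sset

theorem eq_signedSwap_of_apply_lt (hg : g ∈ Sset n) (ha : a ≠ 0) (hb : b ≠ 0) (hab : a < b)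
    (h : g b < g a) : g = signedSwap a b := by
  rcases hg with rfl | ⟨i, hi, rfl⟩
  · obtain ⟨rfl, rfl⟩ : a = -1 ∧ b = 1 := by
      simp only [tgen_apply] at h
      split_ifs at h <;> omega
    exact tgen_eq_signedSwap
  · have hi : 1 ≤ i := hi.1
    obtain ⟨rfl, rfl⟩ | ⟨rfl, rfl⟩ : (a = i ∧ b = i + 1) ∨ (a = -(i + 1) ∧ b = -i) := by
      simp only [sgen_apply hi] at h
      split_ifs at h <;> omega
    · exact sgen_eq_signedSwap i
    · ext x
      rw [signedSwap, if_neg (by omega), sgen_apply hi]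
      simp only [Equiv.Perm.mul_apply, Equiv.swap_apply_def]
      split_ifs <;> omega

end Reflections

section Length

variable {n : ℕ} {g w : P} {a b : ℤ}

theorem exists_eraseIdx_prod_eq_mul_signedSwap {l : List P} (hl : ∀ g ∈ l, g ∈ Sset n)
    (ha : a ≠ 0) (hb : b ≠ 0) (hab : a < b) (h : l.prod b < l.prod a) :
    ∃ i < l.length, (l.eraseIdx i).prod = l.prod * signedSwap a b := by
  induction l with
  | nil => simp only [List.prod_nil, Equiv.Perm.one_apply] at h; omega
  | cons g l ih =>
    rw [List.forall_mem_cons] at hl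
    obtain ⟨hg, hl⟩ := hl
    by_cases hinv : l.prod b < l.prod a
    · obtain ⟨i, hi, hprod⟩ := ih hl hinv
      exact ⟨i + 1, Nat.succ_lt_succ hi, by
        rw [List.eraseIdx_cons_succ, List.prod_cons, List.prod_cons, hprod, mul_assoc]⟩
    · have hodd : l.prod ∈ oddPerm :=
        oddPerm.list_prod_mem fun x hx ↦ mem_oddPerm_of_mem_Sset (hl x hx)
      have hlt : l.prod a < l.prod b :=
        lt_of_le_of_ne (not_lt.mp hinv) (l.prod.injective.ne hab.ne)
      have hg_eq : g = signedSwap (l.prod a) (l.prod b) :=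
        eq_signedSwap_of_apply_lt hg (apply_ne_zero_of_mem_oddPerm hodd ha)
          (apply_ne_zero_of_mem_oddPerm hodd hb) hlt
          (by simpa only [List.prod_cons, Equiv.Perm.mul_apply] using h)
      refine ⟨0, by simp, ?_⟩
      calc l.prod = g⁻¹ * (g * l.prod) := (inv_mul_cancel_left _ _).symm
        _ = g * l.prod * signedSwap a b := by
          rw [inv_eq_self_of_mem_Sset hg, mul_assoc g l.prod, mul_signedSwap hodd, ← hg_eq]

theorem len_prod_le {l : List P} (hl : ∀ g ∈ l, g ∈ Sset n) : len n l.prod ≤ l.length :=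
  Nat.sInf_le ⟨l, hl, rfl, rfl⟩

theorem exists_prod_eq_and_length_eq_len (hw : w ∈ Subgroup.closure (Sset n)) :
    ∃ l : List P, (∀ g ∈ l, g ∈ Sset n) ∧ l.prod = w ∧ l.length = len n w := by
  rw [← Subgroup.mem_toSubmonoid, Subgroup.closure_toSubmonoid] at hw
  obtain ⟨l, hl, hprod⟩ := Submonoid.exists_list_of_mem_closure hw
  refine Nat.sInf_mem
    (s := {k | ∃ l : List P, (∀ g ∈ l, g ∈ Sset n) ∧ l.prod = w ∧ l.length = k})
    ⟨l.length, l, fun g hg ↦ ?_, hprod, rfl⟩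
  rcases hl g hg with h | h
  · exact h
  · rwa [← inv_inv g, inv_eq_self_of_mem_Sset h]

-- `len` takes the junk value `0` off the group generated by `Sset n`.
theorem mem_closure_Sset_of_len_pos (h : 0 < len n w) : w ∈ Subgroup.closure (Sset n) := by
  obtain ⟨-, l, hl, rfl, -⟩ := Nat.nonempty_of_pos_sInf h
  exact Subgroup.list_prod_mem _ fun g hg ↦ Subgroup.subset_closure (hl g hg)

theorem len_mul_signedSwap_lt (hw : w ∈ Subgroup.closure (Sset n)) (ha : a ≠ 0) (hb : b ≠ 0)
    (hab : a < b) (h : w b < w a) : len n (w * signedSwap a b) < len n w := by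
  obtain ⟨l, hl, rfl, hlen⟩ := exists_prod_eq_and_length_eq_len hw
  obtain ⟨i, hi, hprod⟩ := exists_eraseIdx_prod_eq_mul_signedSwap hl ha hb hab h
  calc len n (l.prod * signedSwap a b) ≤ (l.eraseIdx i).length :=
        hprod ▸ len_prod_le fun g hg ↦ hl g (List.mem_of_mem_eraseIdx hg)
    _ < len n l.prod := by rw [List.length_eraseIdx_of_lt hi]; omega

theorem apply_lt_apply_of_len_lt_len_mul (hr : signedSwap a b ∈ Sset n) (ha : a ≠ 0) (hb : b ≠ 0)
    (hab : a < b) (h : len n w < len n (w * signedSwap a b)) : w a < w b := by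
  have hw : w ∈ Subgroup.closure (Sset n) :=
    (Subgroup.mul_mem_cancel_right _ (Subgroup.subset_closure hr)).mp
      (mem_closure_Sset_of_len_pos (Nat.zero_lt_of_lt h))
  by_contra hnot
  have hinv : w b < w a := lt_of_le_of_ne (not_lt.mp hnot) (w.injective.ne hab.ne')
  exact lt_asymm h (len_mul_signedSwap_lt hw ha hb hab hinv)

theorem len_inv (n : ℕ) (w : P) : len n w⁻¹ = len n w := by
  have reverse_word (u : P) (k : ℕ) :
      (∃ l : List P, (∀ g ∈ l, g ∈ Sset n) ∧ l.prod = u ∧ l.length = k) →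
        ∃ l : List P, (∀ g ∈ l, g ∈ Sset n) ∧ l.prod = u⁻¹ ∧ l.length = k := by
    rintro ⟨l, hl, rfl, rfl⟩
    refine ⟨l.reverse, fun g hg ↦ hl g (List.mem_reverse.mp hg), ?_, List.length_reverse⟩
    rw [List.prod_inv_reverse,
      List.map_congr_left fun g hg ↦ inv_eq_self_of_mem_Sset (hl g hg), List.map_id']
  refine congrArg sInf (Set.ext fun k ↦ ⟨fun h ↦ ?_, reverse_word w k⟩)
  simpa only [inv_inv, Set.mem_ofPred_eq] using reverse_word w⁻¹ k h

theorem len_inv_mul (hg : g ∈ Sset n) (w : P) : len n (w⁻¹ * g) = len n (g * w) := by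
  rw [← len_inv, mul_inv_rev, inv_inv, inv_eq_self_of_mem_Sset hg]

theorem strictMonoOn_of_len_lt_len_mul_sgen {m : ℕ} (hm : 1 ≤ m)
    (h : ∀ i ∈ Set.Icc m (n - 1), len n w < len n (w * sgen i)) :
    StrictMonoOn w (Set.Icc (m : ℤ) n) := by
  refine strictMonoOn_of_lt_add_one Set.ordConnected_Icc fun x _ hx hx' ↦ ?_
  rw [Set.mem_Icc] at hx hx'
  lift x to ℕ using by omega
  have hlen := h x ⟨by omega, by omega⟩
  have hmem : sgen x ∈ Sset n := sgen_mem_Sset ⟨by omega, by omega⟩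
  rw [sgen_eq_signedSwap] at hlen hmem
  exact apply_lt_apply_of_len_lt_len_mul hmem (by omega) (by omega) (by omega) hlen

theorem strictMonoOn_inv_of_len_lt_len_sgen_mul {m : ℕ} (hm : 1 ≤ m)
    (h : ∀ i ∈ Set.Icc m (n - 1), len n w < len n (sgen i * w)) :
    StrictMonoOn ⇑w⁻¹ (Set.Icc (m : ℤ) n) :=
  strictMonoOn_of_len_lt_len_mul_sgen hm fun i hi ↦ by
    rw [len_inv, len_inv_mul (sgen_mem_Sset ⟨hm.trans hi.1, hi.2⟩)]
    exact h i hi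

theorem inv_apply_one_pos_of_len_lt_len_tgen_mul (hw : w ∈ oddPerm)
    (h : len n w < len n (tgen * w)) : 0 < w⁻¹ 1 := by
  have hmem := tgen_mem_Sset n
  rw [← len_inv, ← len_inv_mul hmem, tgen_eq_signedSwap] at h
  rw [tgen_eq_signedSwap] at hmem
  have hlt := apply_lt_apply_of_len_lt_len_mul hmem (by norm_num) (by norm_num) (by norm_num) h
  rw [mem_oddPerm_iff.mp (inv_mem hw)] at hlt
  omega

end Length

section ProductOfR

variable {n k : ℕ}

theorem rgen_mem_closure_Sset (hk : k ≤ n) : rgen k ∈ Subgroup.closure (Sset n) := by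
  induction k with
  | zero => exact one_mem _
  | succ k ih =>
    cases k with
    | zero => exact Subgroup.subset_closure (tgen_mem_Sset n)
    | succ k =>
      exact mul_mem (Subgroup.subset_closure (sgen_mem_Sset ⟨by omega, by omega⟩)) (ih (by omega))

theorem rgen_succ_apply (k : ℕ) {x : ℤ} (hx : 0 < x) :
    rgen (k + 1) x = if x = 1 then -((k : ℤ) + 1) else if x ≤ k + 1 then x - 1 else x := by
  induction k with
  | zero =>
    simp only [rgen, tgen_apply]
    split_ifs <;> omega
  | succ k ih =>
    rw [rgen, Equiv.Perm.mul_apply, ih, sgen_apply (by omega)]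
    push_cast
    split_ifs <;> omega

/-- The product `r_2 r_3 ⋯ r_{k+1}` of `k` factors, the candidate for `w`. -/
def rProd (k : ℕ) : P := ((List.range k).map (fun j ↦ rgen (j + 2))).prod

theorem rProd_succ (k : ℕ) : rProd (k + 1) = rProd k * rgen (k + 2) := by
  simp only [rProd, List.range_succ, List.map_append, List.prod_append, List.map_singleton,
    List.prod_singleton]

theorem rProd_mem_closure_Sset (hk : k + 1 ≤ n) : rProd k ∈ Subgroup.closure (Sset n) := by
  refine Subgroup.list_prod_mem _ fun g hg ↦ ?_
  obtain ⟨j, hj, rfl⟩ := List.mem_map.mp hg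
  exact rgen_mem_closure_Sset (by rw [List.mem_range] at hj; omega)

theorem rProd_mem_oddPerm (k : ℕ) : rProd k ∈ oddPerm :=
  closure_Sset_le_oddPerm (k + 1) (rProd_mem_closure_Sset le_rfl)

theorem rProd_apply (k : ℕ) {x : ℤ} (hx : 0 < x) :
    rProd k x = if x ≤ k then x - k - 2 else if x = k + 1 then 1 else x := by
  induction k generalizing x with
  | zero =>
    simp only [rProd, List.range_zero, List.map_nil, List.prod_nil, Equiv.Perm.one_apply]
    split_ifs <;> omega
  | succ k ih =>
    rw [rProd_succ, Equiv.Perm.mul_apply, rgen_succ_apply _ hx]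
    by_cases h1 : x = 1
    · rw [if_pos h1, mem_oddPerm_iff.mp (rProd_mem_oddPerm k), ih (by omega)]
      split_ifs <;> omega
    · rw [if_neg h1, ih (by split_ifs <;> omega)]
      split_ifs <;> omega

end ProductOfR

section Classification

theorem monotoneOn_sub_id_of_strictMonoOn {f : ℤ → ℤ} {s : Set ℤ} (hs : s.OrdConnected)
    (hf : StrictMonoOn f s) : MonotoneOn (fun x ↦ f x - x) s :=
  monotoneOn_of_le_add_one hs fun x _ hx hx' ↦ by
    have := hf hx hx' (lt_add_one x)
    omega

theorem apply_le_self_of_strictMonoOn {f : ℤ → ℤ} {a b x : ℤ} (hf : StrictMonoOn f (Set.Icc a b))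
    (hb : f b ≤ b) (hx : x ∈ Set.Icc a b) : f x ≤ x := by
  have := monotoneOn_sub_id_of_strictMonoOn Set.ordConnected_Icc hf hx
    (Set.right_mem_Icc.mpr (hx.1.trans hx.2)) hx.2
  dsimp only at this
  omega

variable {n : ℕ} {w : P} {m x : ℤ}

theorem mem_oddPerm_of_mem_Wset (hw : w ∈ Wset n) : w ∈ oddPerm := mem_oddPerm_iff.mpr hw.1

theorem abs_apply_le_iff_of_mem_Wset (hw : w ∈ Wset n) : |w x| ≤ n ↔ |x| ≤ n := by
  simp only [← not_lt]
  refine not_congr ⟨fun h ↦ ?_, fun h ↦ (hw.2 x h).symm ▸ h⟩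
  rwa [w.injective (hw.2 (w x) h)] at h

theorem abs_inv_apply_le_iff_of_mem_Wset (hw : w ∈ Wset n) : |w⁻¹ x| ≤ n ↔ |x| ≤ n := by
  rw [← abs_apply_le_iff_of_mem_Wset hw, Equiv.Perm.coe_inv, Equiv.apply_symm_apply]

theorem apply_eq_self_of_strictMonoOn (hw : w ∈ Wset n)
    (hmono : StrictMonoOn w (Set.Icc (1 : ℤ) n)) (hmono_inv : StrictMonoOn ⇑w⁻¹ (Set.Icc (2 : ℤ) n))
    (hm : 1 ≤ m) (hwm : w m = 1) (hmx : m < x) : w x = x := by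
  rcases lt_or_ge (n : ℤ) x with hnx | hxn
  · exact hw.2 x (hnx.trans_le (le_abs_self x))
  have hn : |(n : ℤ)| ≤ n := (Nat.abs_cast n).le
  have hx : x ∈ Set.Icc (1 : ℤ) n := ⟨by omega, hxn⟩
  have hle : w x ≤ x :=
    apply_le_self_of_strictMonoOn hmono
      ((le_abs_self _).trans ((abs_apply_le_iff_of_mem_Wset hw).mpr hn)) hx
  have hlt : w m < w x := hmono ⟨hm, by omega⟩ hx hmx
  have hge : w⁻¹ (w x) ≤ w x :=
    apply_le_self_of_strictMonoOn hmono_inv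
      ((le_abs_self _).trans ((abs_inv_apply_le_iff_of_mem_Wset hw).mpr hn)) ⟨by omega, by omega⟩
  rw [Equiv.Perm.coe_inv, Equiv.symm_apply_apply] at hge
  exact hle.antisymm hge

theorem apply_eq_sub_sub_one_of_strictMonoOn (hw : w ∈ oddPerm)
    (hmono : StrictMonoOn w (Set.Icc 1 m)) (hfix : ∀ x, m < x → w x = x) (hwm : w m = 1)
    (hx : 1 ≤ x) (hxm : x < m) : w x = x - m - 1 := by
  have hodd : Function.Odd w := mem_oddPerm_iff.mp hw
  have hlower : -m ≤ w 1 := by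
    by_contra hlt
    have hneg : w (-w 1) = w (-1) := by rw [hfix _ (by omega), hodd]
    have := w.injective hneg
    omega
  have hupper : w (m - 1) ≤ -2 := by
    have hlt : w (m - 1) < w m := hmono ⟨by omega, by omega⟩ ⟨by omega, le_rfl⟩ (by omega)
    have hne_zero : w (m - 1) ≠ 0 := apply_ne_zero_of_mem_oddPerm hw (by omega)
    have hne_neg_one : w (m - 1) ≠ -1 := by
      rw [← hwm, ← hodd]
      exact w.injective.ne (by omega)
    omega
  have hspread := monotoneOn_sub_id_of_strictMonoOn Set.ordConnected_Icc hmono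
  have hge := hspread (a := 1) ⟨le_rfl, by omega⟩ ⟨hx, hxm.le⟩ hx
  have hle := hspread (b := m - 1) ⟨hx, hxm.le⟩ ⟨by omega, by omega⟩ (by omega)
  dsimp only at hge hle
  omega

theorem exists_eq_rProd_of_strictMonoOn (hw : w ∈ Wset n)
    (hmono : StrictMonoOn w (Set.Icc (1 : ℤ) n)) (hmono_inv : StrictMonoOn ⇑w⁻¹ (Set.Icc (2 : ℤ) n))
    (hpos : 0 < w⁻¹ 1) (hn : 1 ≤ n) : ∃ k < n, w = rProd k := by
  obtain ⟨k, hk⟩ : ∃ k : ℕ, w⁻¹ 1 = k + 1 := ⟨(w⁻¹ 1 - 1).toNat, by omega⟩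
  have hwk : w (k + 1) = 1 := Equiv.Perm.eq_inv_iff_eq.mp hk.symm
  have hkn : k < n := by
    have hle : |w⁻¹ 1| ≤ n := (abs_inv_apply_le_iff_of_mem_Wset hw).mpr (by simpa using hn)
    rw [abs_of_pos hpos] at hle
    omega
  have hodd : w ∈ oddPerm := mem_oddPerm_of_mem_Wset hw
  have hfix (x : ℤ) (hx : k + 1 < x) : w x = x :=
    apply_eq_self_of_strictMonoOn hw hmono hmono_inv (by omega) hwk hx
  refine ⟨k, hkn, oddPerm_ext hodd (rProd_mem_oddPerm k) fun x hx ↦ ?_⟩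
  rw [rProd_apply k hx]
  split_ifs with hlt heq
  · rw [apply_eq_sub_sub_one_of_strictMonoOn hodd
      (hmono.mono (Set.Icc_subset_Icc_right (by omega))) hfix hwk (by omega) (by omega)]
    ring
  · rw [heq, hwk]
  · exact hfix x (by omega)

end Classification

/-- If `n ≥ 2` and `w ∈ W_n` satisfies `w s_i > w` for all
`1 ≤ i ≤ n-1`, `s_i w > w` for all `2 ≤ i ≤ n-1`, `t w > w`, and `w ∉ W_{n-1}`,
then `w = r_2 r_3 ⋯ r_n`. -/
theorem bigrassmannian_lemma (n : ℕ) (hn : 2 ≤ n) (w : P) (hw : w ∈ Wset n)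
    (h1 : ∀ i ∈ Set.Icc 1 (n - 1), len n w < len n (w * sgen i))
    (h2 : ∀ i ∈ Set.Icc 2 (n - 1), len n w < len n (sgen i * w))
    (h3 : len n w < len n (tgen * w))
    (h4 : w ∉ Subgroup.closure (insert tgen (sgen '' Set.Icc 1 (n - 2)))) :
    w = ((List.range (n - 1)).map (fun k => rgen (k + 2))).prod := by
  have hmono : StrictMonoOn w (Set.Icc (1 : ℤ) n) :=
    strictMonoOn_of_len_lt_len_mul_sgen le_rfl h1
  have hmono_inv : StrictMonoOn ⇑w⁻¹ (Set.Icc (2 : ℤ) n) :=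
    strictMonoOn_inv_of_len_lt_len_sgen_mul one_le_two h2
  have hpos : 0 < w⁻¹ 1 :=
    inv_apply_one_pos_of_len_lt_len_tgen_mul (mem_oddPerm_of_mem_Wset hw) h3
  obtain ⟨k, hkn, rfl⟩ := exists_eq_rProd_of_strictMonoOn hw hmono hmono_inv hpos (by omega)
  have hk : ¬ k + 1 ≤ n - 1 := fun h ↦ h4 (rProd_mem_closure_Sset h)
  obtain rfl : k = n - 1 := by omega
  rfl
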